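/- Let r > q ≥ 0 be integers, ν_min > −1, and α a real number with α ≥ ν_min; set m_α := (1+2α−ν_min)/2 > 0. For s > 0 and ζ in the arc A, define Ψ̃(ζ) := −i·logΓ(m_α − i s^ρ ζ) + i·ln Γ(m_α), and set I(s) := −i(c₁+c₂) · (2πi)^{−1} ∫_A Ψ̃(ζ)·(1 − i(Im b₂)/ζ)·(1/r(ζ)) dζ (absolutely convergent). Then I admits the standard divergent expansion with error O(s^{−ρ} ln s) and constant term κ = −((c₁+c₂)/2)·( ln(2π)/2 − ln Γ(m_α) )·(1 − (Im b₂)/|b₂|) − (c₁+c₂)·((2α−ν_min)/2)·( (ln(|b₂|+Im b₂) − ln 2)/2 − ((Im b₂)/(2|b₂|))·ln(2|b₂|²/(|b₂|+Im b₂)) ). -/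

import Mathlib

open Complex Filter MeasureTheory

noncomputable section

/-- Principal branch of log-Gamma on `ℂ ∖ (-∞,0]`. -/
def logGammaP (z : ℂ) : ℂ :=
  -(Real.eulerMascheroniConstant : ℂ) * z - Complex.log z +
    ∑' k : ℕ, (z / ((k : ℂ) + 1) - Complex.log (1 + z / ((k : ℂ) + 1)))

/-- `ρ = 1/(1+c₂)` where `c₂ = r - q`. -/
def rhoOf (c : ℝ) : ℝ := 1 / (1 + c)

/-- `φ ∈ [0, π/2)` with `sin φ = (c-1)/(c+1)`, `c = r - q`. -/
def phiOf (c : ℝ) : ℝ := Real.arcsin ((c - 1) / (c + 1))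

/-- `|b₂|`, determined by `Re b₂ = 2 c^{(1-c)/(2(1+c))}` and `arg b₂ = φ`. -/
def b2abs (c : ℝ) : ℝ := 2 * c ^ ((1 - c) / (2 * (1 + c))) / Real.cos (phiOf c)

/-- The point `b₂ = |b₂| e^{iφ}`. -/
def b2Of (c : ℝ) : ℂ := (b2abs c : ℂ) * Complex.exp ((phiOf c : ℝ) * Complex.I)

/-- Integral along the circular arc `{R e^{iθ} : φ ≤ θ ≤ π - φ}`, oriented counterclockwise. -/
def arcIntegral (R φ : ℝ) (f : ℂ → ℂ) : ℂ :=
  ∫ θ in φ..(Real.pi - φ),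
    f ((R : ℂ) * Complex.exp ((θ : ℝ) * Complex.I)) *
      (Complex.I * (R : ℂ) * Complex.exp ((θ : ℝ) * Complex.I))

/-- The branch `r(ζ) = ζ √(1 - 2i (Im b₂)/ζ - |b₂|²/ζ²)` (principal square root). -/
def rBranch (c : ℝ) (ζ : ℂ) : ℂ :=
  ζ * (1 - 2 * Complex.I * ((b2Of c).im : ℂ) / ζ - ((b2abs c : ℂ)) ^ 2 / ζ ^ 2) ^ ((1 : ℂ) / 2)

/-- `f` admits the standard divergent expansion with constant term `κ` and
error `O(s^{-ρ} ln s)` as `s → +∞`. -/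
def HasStdExpansion (ρ : ℝ) (f : ℝ → ℂ) (κ : ℂ) : Prop :=
  ∃ d₁ d₂ d₃ d₄ d₅ d₆ d₇ : ℂ,
    (fun s : ℝ =>
        f s - (d₁ * (s ^ (2 * ρ) : ℝ) * (Real.log s : ℝ) + d₂ * (s ^ (2 * ρ) : ℝ) +
          d₃ * (s ^ ρ : ℝ) * ((Real.log s : ℝ)) ^ 2 + d₄ * (s ^ ρ : ℝ) * (Real.log s : ℝ) +
          d₅ * (s ^ ρ : ℝ) + d₆ * ((Real.log s : ℝ)) ^ 2 + d₇ * (Real.log s : ℝ) + κ))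
      =O[atTop] fun s : ℝ => s ^ (-ρ) * Real.log s

/-- `Ψ̃(ζ) = -i logΓ(m_α - i s^ρ ζ) + i ln Γ(m_α)`. -/
def PsiTilde (c mα : ℝ) (s : ℝ) (ζ : ℂ) : ℂ :=
  -Complex.I * logGammaP ((mα : ℂ) - Complex.I * (s ^ rhoOf c : ℝ) * ζ) +
    Complex.I * ((Real.log (Real.Gamma mα) : ℝ) : ℂ)

/-- `I(s) = -i(c₁+c₂)(2πi)^{-1} ∫_A Ψ̃(ζ)(1 - i Im b₂/ζ)(1/r(ζ)) dζ`, `c₁+c₂ = 1+(r-q)`. -/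
def Ifun (c mα : ℝ) (s : ℝ) : ℂ :=
  -Complex.I * (((1 + c : ℝ)) : ℂ) * (2 * Real.pi * Complex.I)⁻¹ *
    arcIntegral (b2abs c) (phiOf c)
      (fun ζ => PsiTilde c mα s ζ * (1 - Complex.I * ((b2Of c).im : ℂ) / ζ) * (rBranch c ζ)⁻¹)

/-- The constant term in the asymptotics of `I_{1,α}`. -/
def kappa5 (c mα α νmin : ℝ) : ℝ :=
  -((1 + c) / 2) * (Real.log (2 * Real.pi) / 2 - Real.log (Real.Gamma mα)) *
      (1 - (b2Of c).im / b2abs c) -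
    (1 + c) * ((2 * α - νmin) / 2) *
      ((Real.log (b2abs c + (b2Of c).im) - Real.log 2) / 2 -
        (b2Of c).im / (2 * b2abs c) * Real.log (2 * b2abs c ^ 2 / (b2abs c + (b2Of c).im)))

/-!
With `k = (1 + c)^{-1/2}`, so that `sin φ = 1 - 2k²`, the substitution `sin v = k sin t` and
`ζ = i |b₂| e^{2iv}` rationalises the square root: `(1 - i (Im b₂)/ζ) dζ / r(ζ)` becomes `W(t) dt`
with `W` continuous, `t` runs through `[-π/2, π/2]`, and `-i s^ρ ζ = τ e^{2iv}` where
`τ = |b₂| s^ρ`. As `|2v|` stays below `π`, Stirling's formula for `logΓ(m + τ e^{2iv})` holds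
uniformly in `t`, with error `O(1/τ)`, and can be integrated. The constant term then involves only
`∫ W` and `∫ 2v W`. By parity these reduce to the length of the interval and to `∫ v tan v`, which
is found by differentiating in `k`: the derivative of its integrand has an elementary primitive
in `t`.
-/

open Asymptotics Bornology
open scoped Topology

/-! ### Logarithms and the principal branch of log-Gamma -/

lemma add_ofReal_mem_slitPlane {x : ℂ} (hx : x ∈ slitPlane) {t : ℝ} (ht : 0 ≤ t) :
    x + t ∈ slitPlane :=
  hx.imp (fun hre => by simpa using add_pos_of_pos_of_nonneg hre ht) (fun him => by simpa using him)

lemma log_add_ofReal {x : ℂ} (hx : x ∈ slitPlane) {t : ℝ} (ht : 0 < t) :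
    log (x + t) = log x + log (1 + t / x) := by
  have hx0 : x ≠ 0 := slitPlane_ne_zero hx
  have hxt : x + t ∈ slitPlane := add_ofReal_mem_slitPlane hx ht.le
  have hquot : 1 + t / x = (x + t) / x := by field_simp
  have hquot0 : 1 + t / x ≠ 0 := hquot ▸ div_ne_zero (slitPlane_ne_zero hxt) hx0
  have him : (1 + t / x).im = -(t / normSq x) * x.im := by
    simp only [add_im, one_im, div_im, ofReal_re, ofReal_im, zero_mul, zero_div]
    ring
  have harg : x.arg + (1 + t / x).arg ∈ Set.Ioc (-Real.pi) Real.pi := by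
    have hfactor : 0 < t / normSq x := div_pos ht (normSq_pos.2 hx0)
    have hpi := mem_slitPlane_iff_arg.1 hx
    have hx_gt := neg_pi_lt_arg x
    have hx_le := arg_le_pi x
    have hquot_gt := neg_pi_lt_arg (1 + t / x)
    have hquot_le := arg_le_pi (1 + t / x)
    have hx_lt : x.arg < Real.pi := lt_of_le_of_ne hx_le hpi.1
    rcases lt_trichotomy x.im 0 with hneg | hzero | hpos
    · have := arg_neg_iff.2 hneg
      have : 0 ≤ (1 + t / x).arg := arg_nonneg_iff.2 (by rw [him]; nlinarith)
      constructor <;> linarith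
    · have hre : 0 < x.re := hx.resolve_right (not_not.2 hzero)
      have : (1 + t / x).arg = 0 := by
        refine arg_eq_zero_iff.2 ⟨?_, by rw [him, hzero, mul_zero]⟩
        simp only [add_re, one_re, div_re, ofReal_re, ofReal_im, zero_mul, zero_div, add_zero]
        exact add_nonneg zero_le_one (div_nonneg (mul_pos ht hre).le (normSq_nonneg x))
      constructor <;> linarith
    · have := arg_nonneg_iff.2 hpos.le
      have : (1 + t / x).arg < 0 := arg_neg_iff.2 (by rw [him]; nlinarith)
      constructor <;> linarith
  rw [← (log_mul_eq_add_log_iff hx0 hquot0).2 harg]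
  congr 1
  field_simp

lemma log_add_ofReal_eq_log_ofReal_add {x : ℂ} {t : ℝ} (ht : 0 < t) (hxt : x + t ≠ 0) :
    log (x + t) = Real.log t + log (1 + x / t) := by
  have ht0 : (t : ℂ) ≠ 0 := mod_cast ht.ne'
  have hmul : x + t = t * (1 + x / t) := by
    field_simp
    ring
  rw [hmul, log_ofReal_mul ht (right_ne_zero_of_mul (hmul ▸ hxt))]

lemma summable_div_sub_log_one_add_div (w : ℂ) :
    Summable fun k : ℕ => w / ((k : ℂ) + 1) - log (1 + w / ((k : ℂ) + 1)) := by
  have hsq : Summable fun k : ℕ => 1 / ((k : ℝ) + 1) ^ 2 := by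
    simpa using (summable_nat_add_iff 1).2 (Real.summable_one_div_nat_pow.2 one_lt_two)
  have htend : Tendsto (fun k : ℕ => w / ((k : ℂ) + 1)) atTop (𝓝 0) := by
    simpa [div_eq_mul_inv] using
      (tendsto_one_div_add_atTop_nhds_zero_nat (𝕜 := ℂ)).const_mul w
  refine summable_of_isBigO_nat hsq
    (((log_sub_self_isBigO.comp_tendsto htend).neg_left.congr_left fun k => neg_sub _ _).trans ?_)
  refine IsBigO.of_bound (‖w‖ ^ 2) (Eventually.of_forall fun k => le_of_eq ?_)
  have hnorm : ‖(k : ℂ) + 1‖ = k + 1 := mod_cast Complex.norm_natCast (k + 1)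
  rw [Real.norm_of_nonneg (by positivity)]
  simp [hnorm, div_eq_mul_inv, mul_pow]

lemma measurable_logGammaP : Measurable logGammaP := by
  unfold logGammaP
  fun_prop

/-- The Gauss product for `Γ`, in logarithmic form. -/
lemma tendsto_logGammaP {w : ℂ} (hw : w ∈ slitPlane) :
    Tendsto (fun N : ℕ => w * Real.log N + ∑ k ∈ Finset.range N, (Real.log ((k : ℝ) + 1) : ℂ) -
      ∑ k ∈ Finset.range (N + 1), log (w + k)) atTop (𝓝 (logGammaP w)) := by
  have hharm : Tendsto (fun N : ℕ => (((harmonic N : ℝ) - Real.log N : ℝ) : ℂ)) atTop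
      (𝓝 (Real.eulerMascheroniConstant : ℂ)) :=
    (continuous_ofReal.tendsto _).comp Real.tendsto_harmonic_sub_log
  have hlim : logGammaP w = (∑' k : ℕ, (w / ((k : ℂ) + 1) - log (1 + w / ((k : ℂ) + 1)))) -
      (Real.eulerMascheroniConstant : ℂ) * w - log w := by
    unfold logGammaP; ring
  rw [hlim]
  refine (((summable_div_sub_log_one_add_div w).hasSum.tendsto_sum_nat.sub
    (hharm.mul_const w)).sub_const (log w)).congr fun N => ?_
  have hsum : ∑ k ∈ Finset.range N, (w / ((k : ℂ) + 1) - log (1 + w / ((k : ℂ) + 1)))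
      = (harmonic N : ℂ) * w - ∑ k ∈ Finset.range N, (log (w + ((k + 1 : ℕ) : ℂ))
        - (Real.log ((k : ℝ) + 1) : ℂ)) := by
    simp only [harmonic, Rat.cast_sum, Finset.sum_mul, ← Finset.sum_sub_distrib]
    refine Finset.sum_congr rfl fun k _ => ?_
    have hlog := log_add_ofReal_eq_log_ofReal_add (x := w) (t := (k : ℝ) + 1) (by positivity)
      (slitPlane_ne_zero (add_ofReal_mem_slitPlane hw (by positivity)))
    push_cast at hlog ⊢
    rw [hlog]
    ring
  rw [hsum, Finset.sum_range_succ' _ N, Finset.sum_sub_distrib]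
  push_cast
  rw [add_zero]
  ring

/-! ### Stirling's formula in sectors -/

/-- The closed sector `|arg z| ≤ arccos δ` (vertex included), written without arguments; it avoids
the negative axis as soon as `-1 < δ`. -/
def closedSector (δ : ℝ) : Set ℂ := {z | δ * ‖z‖ ≤ z.re}

lemma mem_slitPlane_of_mem_closedSector {δ : ℝ} (hδ : -1 < δ) {w : ℂ} (hw : w ∈ closedSector δ)
    (hw0 : w ≠ 0) : w ∈ slitPlane := by
  by_contra hslit
  obtain ⟨hre, him⟩ : w.re ≤ 0 ∧ w.im = 0 := by simpa [mem_slitPlane_iff] using hslit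
  have hnorm : ‖w‖ = -w.re := by
    rw [← abs_of_nonpos hre, abs_re_eq_norm.2 him]
  have hpos := norm_pos_iff.2 hw0
  have : δ * ‖w‖ ≤ w.re := hw
  nlinarith

lemma le_one_of_mem_closedSector {δ : ℝ} {w : ℂ} (hw : w ∈ closedSector δ) (hw0 : w ≠ 0) :
    δ ≤ 1 := by
  have hsector : δ * ‖w‖ ≤ w.re := hw
  exact le_of_mul_le_mul_right (by linarith [re_le_norm w]) (norm_pos_iff.2 hw0)

lemma mul_sq_norm_add_le_sq_norm_add {δ : ℝ} {w : ℂ} (hw : w ∈ closedSector δ) (hw0 : w ≠ 0)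
    {t : ℝ} (ht : 0 ≤ t) : (1 + δ) / 2 * (‖w‖ + t) ^ 2 ≤ ‖w + t‖ ^ 2 := by
  have hsector : δ * ‖w‖ ≤ w.re := hw
  have hδ : δ ≤ 1 := le_one_of_mem_closedSector hw hw0
  have hexpand : ‖w + t‖ ^ 2 = ‖w‖ ^ 2 + 2 * t * w.re + t ^ 2 := by
    rw [Complex.sq_norm, Complex.sq_norm, normSq_apply, normSq_apply]
    simp only [add_re, add_im, ofReal_re, ofReal_im]
    ring
  rw [hexpand]
  nlinarith [mul_le_mul_of_nonneg_left hsector ht,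
    mul_nonneg (sub_nonneg.2 hδ) (sq_nonneg (‖w‖ - t))]

lemma sum_range_inv_add_sq_le {a : ℝ} (ha : 2 ≤ a) (N : ℕ) :
    ∑ k ∈ Finset.range N, ((a + k) ^ 2)⁻¹ ≤ 2 * a⁻¹ := by
  have hterm : ∀ k : ℕ, ((a + k) ^ 2)⁻¹ ≤ (a + k - 1)⁻¹ - (a + (k + 1 : ℕ) - 1)⁻¹ := by
    intro k
    have : (0 : ℝ) ≤ k := k.cast_nonneg
    have hpos : 0 < a + k - 1 := by linarith
    have hdiff : (a + k - 1)⁻¹ - (a + (k + 1 : ℕ) - 1)⁻¹ = ((a + k - 1) * (a + k))⁻¹ := by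
      rw [show a + ((k + 1 : ℕ) : ℝ) - 1 = a + k by push_cast; ring,
        inv_sub_inv hpos.ne' (by linarith), mul_comm, inv_eq_one_div]
      ring_nf
    rw [hdiff]
    exact inv_anti₀ (by nlinarith) (by nlinarith)
  have hlast : 0 ≤ (a + (N : ℝ) - 1)⁻¹ :=
    inv_nonneg.2 (by linarith [(N.cast_nonneg : (0 : ℝ) ≤ N)])
  calc ∑ k ∈ Finset.range N, ((a + k) ^ 2)⁻¹
      ≤ ∑ k ∈ Finset.range N, ((a + k - 1)⁻¹ - (a + (k + 1 : ℕ) - 1)⁻¹) :=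
        Finset.sum_le_sum fun k _ => hterm k
    _ = (a - 1)⁻¹ - (a + N - 1)⁻¹ := by
        rw [Finset.sum_range_sub' (fun k : ℕ => (a + (k : ℝ) - 1)⁻¹)]; simp
    _ ≤ 2 * a⁻¹ := by
        have : (a - 1)⁻¹ ≤ 2 * a⁻¹ := by
          rw [inv_le_iff_one_le_mul₀ (by linarith)]
          field_simp
          linarith
        linarith

/-- The main part `(x - 1/2) log x - x` of Stirling's approximation to `log Γ(x)`, without the
constant `log (2π) / 2`. -/
def stirlingMain (x : ℂ) : ℂ := (x - 1 / 2) * log x - x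

/-- The defect of `stirlingMain` in the functional equation `log Γ(x+1) - log Γ(x) = log x`. -/
def stirlingIncrement (x : ℂ) : ℂ := (x + 1 / 2) * log (1 + 1 / x) - 1

lemma stirlingMain_add_one {x : ℂ} (hx : x ∈ slitPlane) :
    stirlingMain (x + 1) - stirlingMain x = log x + stirlingIncrement x := by
  have hlog := log_add_ofReal hx one_pos
  rw [ofReal_one] at hlog
  rw [stirlingMain, stirlingMain, stirlingIncrement, hlog]
  ring

lemma sum_range_log_add_eq {w : ℂ} (hw : w ∈ slitPlane) (N : ℕ) :
    ∑ k ∈ Finset.range N, log (w + k) =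
      stirlingMain (w + N) - stirlingMain w - ∑ k ∈ Finset.range N, stirlingIncrement (w + k) := by
  rw [eq_sub_iff_add_eq, ← Finset.sum_add_distrib]
  have htelescope := Finset.sum_range_sub (fun k : ℕ => stirlingMain (w + k)) N
  rw [Nat.cast_zero, add_zero] at htelescope
  rw [← htelescope]
  refine Finset.sum_congr rfl fun k _ => ?_
  rw [← stirlingMain_add_one (by simpa using add_ofReal_mem_slitPlane hw k.cast_nonneg)]
  push_cast
  rw [add_assoc]

lemma isLittleO_const_cobounded (z : ℂ) : (fun _ => z) =o[cobounded ℂ] fun w : ℂ => w :=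
  isLittleO_const_left.2 (Or.inr tendsto_norm_cobounded_atTop)

lemma isBigO_stirlingIncrement :
    stirlingIncrement =O[cobounded ℂ] fun x => (x ^ 2)⁻¹ := by
  have hinv : Tendsto (fun x : ℂ => 1 / x) (cobounded ℂ) (𝓝 0) := by
    simpa using tendsto_inv₀_cobounded (α := ℂ)
  -- `log (1 + y) = y - y² / 2 + O(y³)` with `y = 1 / x`; in the increment the `1 / x` terms cancel.
  have htaylor := (log_sub_logTaylor_isBigO 2).comp_tendsto hinv
  have hcubic : (fun x : ℂ => (x + 1 / 2) * (log (1 + 1 / x) - logTaylor 3 (1 / x)))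
      =O[cobounded ℂ] fun x => x * (1 / x) ^ 3 := by
    refine IsBigO.mul ?_ htaylor
    exact (isBigO_refl _ _).add (isLittleO_const_cobounded _).isBigO
  have hne := eventually_ne_cobounded (0 : ℂ)
  refine ((isBigO_refl (fun x : ℂ => (x ^ 2)⁻¹) _).const_mul_left (-1 / 4)).add
    (hcubic.congr' EventuallyEq.rfl ?_) |>.congr' ?_ EventuallyEq.rfl
  · filter_upwards [hne] with x hx
    field_simp
  · filter_upwards [hne] with x hx
    have hquad : logTaylor 3 (1 / x) = 1 / x - (1 / x) ^ 2 / 2 := by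
      simp only [logTaylor_succ, logTaylor_zero, Pi.add_apply]
      push_cast
      ring
    rw [stirlingIncrement, hquad]
    generalize log (1 + 1 / x) = l
    field_simp
    ring

lemma exists_norm_sum_stirlingIncrement_le {δ : ℝ} (hδ : -1 < δ) :
    ∃ C : ℝ, ∀ᶠ w in cobounded ℂ ⊓ 𝓟 (closedSector δ), ∀ N : ℕ,
      ‖∑ k ∈ Finset.range N, stirlingIncrement (w + k)‖ ≤ C * ‖w‖⁻¹ := by
  obtain ⟨C, hC0, hC⟩ := isBigO_stirlingIncrement.exists_nonneg
  obtain ⟨M, -, hM⟩ := hasBasis_cobounded_norm.eventually_iff.1 hC.bound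
  have hη : 0 < (1 + δ) / 2 := by linarith
  set η := (1 + δ) / 2
  refine ⟨C * η⁻¹ * 2, eventually_inf_principal.2 ?_⟩
  filter_upwards [eventually_cobounded_le_norm 2, eventually_cobounded_le_norm (|M| / √η)]
    with w hw2 hwM hw N
  have hw0 : w ≠ 0 := norm_pos_iff.1 (by linarith)
  have hterm : ∀ k : ℕ, ‖stirlingIncrement (w + k)‖ ≤ C * η⁻¹ * ((‖w‖ + k) ^ 2)⁻¹ := by
    intro k
    have : 0 < ‖w‖ + k := by positivity
    have hlower : η * (‖w‖ + k) ^ 2 ≤ ‖w + k‖ ^ 2 := by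
      simpa using mul_sq_norm_add_le_sq_norm_add hw hw0 k.cast_nonneg
    have hlarge : M ≤ ‖w + k‖ := by
      refine (le_abs_self M).trans (abs_le_of_sq_le_sq' ?_ (norm_nonneg _)).2
      have : |M| ≤ ‖w‖ * √η := (div_le_iff₀ (by positivity)).1 hwM
      calc |M| ^ 2 ≤ (‖w‖ * √η) ^ 2 := by gcongr
        _ = η * ‖w‖ ^ 2 := by rw [mul_pow, Real.sq_sqrt hη.le, mul_comm]
        _ ≤ η * (‖w‖ + k) ^ 2 := by gcongr; simp
        _ ≤ ‖w + k‖ ^ 2 := hlower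
    calc ‖stirlingIncrement (w + k)‖ ≤ C * (‖w + k‖ ^ 2)⁻¹ := by simpa using hM hlarge
      _ ≤ C * (η * (‖w‖ + k) ^ 2)⁻¹ := by gcongr
      _ = C * η⁻¹ * ((‖w‖ + k) ^ 2)⁻¹ := by rw [mul_inv, mul_assoc]
  calc ‖∑ k ∈ Finset.range N, stirlingIncrement (w + k)‖
      ≤ ∑ k ∈ Finset.range N, C * η⁻¹ * ((‖w‖ + k) ^ 2)⁻¹ := norm_sum_le_of_le _ fun k _ => hterm k
    _ ≤ C * η⁻¹ * (2 * ‖w‖⁻¹) := by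
        rw [← Finset.mul_sum]
        gcongr
        exact sum_range_inv_add_sq_le hw2 N
    _ = C * η⁻¹ * 2 * ‖w‖⁻¹ := by ring

lemma tendsto_sum_range_log_sub :
    Tendsto (fun N : ℕ => ∑ k ∈ Finset.range N, Real.log ((k : ℝ) + 1) -
      (N + 1 / 2) * Real.log N + N) atTop (𝓝 (Real.log (2 * Real.pi) / 2)) := by
  have hconst : Real.log √Real.pi + Real.log 2 / 2 = Real.log (2 * Real.pi) / 2 := by
    rw [Real.log_sqrt (by positivity), Real.log_mul (by norm_num) (by positivity)]; ring
  rw [← hconst]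
  refine (((Real.continuousAt_log (by positivity : √Real.pi ≠ 0)).tendsto.comp
    Stirling.tendsto_stirlingSeq_sqrt_pi).add_const (Real.log 2 / 2)).congr' ?_
  filter_upwards [eventually_gt_atTop 0] with N hN
  have : (0 : ℝ) < N := mod_cast hN
  have hfactorial : ∑ k ∈ Finset.range N, Real.log ((k : ℝ) + 1) = Real.log N.factorial := by
    rw [← Finset.prod_range_add_one_eq_factorial, Nat.cast_prod, Real.log_prod]
    · push_cast; rfl
    · intro k _; positivity
  rw [hfactorial, Function.comp_apply, Stirling.log_stirlingSeq_formula,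
    Real.log_mul (by norm_num) (by positivity), Real.log_div (by positivity) (by positivity),
    Real.log_exp]
  ring

lemma log_add_natCast_eq {w : ℂ} (hw : w ∈ slitPlane) {N : ℕ} (hN : 0 < N) :
    log (w + N) = Real.log N + log (1 + w / N) := by
  simpa using log_add_ofReal_eq_log_ofReal_add (x := w) (t := N) (mod_cast hN)
    (slitPlane_ne_zero (add_ofReal_mem_slitPlane hw N.cast_nonneg))

lemma tendsto_log_one_add_div_natCast (w : ℂ) :
    Tendsto (fun N : ℕ => log (1 + w / N)) atTop (𝓝 0) := by
  have harg : Tendsto (fun N : ℕ => 1 + w / (N : ℂ)) atTop (𝓝 (1 + 0)) := by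
    refine Tendsto.const_add 1 ?_
    simpa [div_eq_mul_inv] using
      (tendsto_inv_atTop_nhds_zero_nat (𝕜 := ℂ)).const_mul w
  simpa using harg.clog (by simp)

lemma tendsto_stirlingMain_add_natCast {w : ℂ} (hw : w ∈ slitPlane) :
    Tendsto (fun N : ℕ => stirlingMain (w + N) - (w + N - 1 / 2) * Real.log N + N)
      atTop (𝓝 0) := by
  have hlin : Tendsto (fun N : ℕ => (N : ℂ) * log (1 + w / N)) atTop (𝓝 w) :=
    tendsto_nat_mul_log_one_add_of_tendsto (tendsto_nhds_of_eventually_eq (by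
      filter_upwards [eventually_ne_atTop 0] with N hN
      field_simp))
  have hsmall := (tendsto_log_one_add_div_natCast w).const_mul (w - 1 / 2)
  have hsum := (hlin.add hsmall).sub_const w
  rw [mul_zero, add_zero, sub_self] at hsum
  refine hsum.congr' ?_
  filter_upwards [eventually_gt_atTop 0] with N hN
  rw [stirlingMain, log_add_natCast_eq hw hN]
  ring

lemma tendsto_sum_stirlingIncrement {w : ℂ} (hw : w ∈ slitPlane) :
    Tendsto (fun N : ℕ => ∑ k ∈ Finset.range N, stirlingIncrement (w + k)) atTop
      (𝓝 (logGammaP w - (stirlingMain w + (Real.log (2 * Real.pi) / 2 : ℝ)))) := by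
  have hlog : Tendsto (fun N : ℕ => log (w + N) - Real.log N) atTop (𝓝 0) := by
    refine (tendsto_log_one_add_div_natCast w).congr' ?_
    filter_upwards [eventually_gt_atTop 0] with N hN
    rw [log_add_natCast_eq hw hN]
    ring
  have hstirling := (continuous_ofReal.tendsto _).comp tendsto_sum_range_log_sub
  have hlim := ((((tendsto_logGammaP hw).sub hstirling).add
    (tendsto_stirlingMain_add_natCast hw)).add hlog).sub_const (stirlingMain w)
  convert! hlim using 2 with N
  · rw [Finset.sum_range_succ, sum_range_log_add_eq hw N]
    simp only [Function.comp_apply]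
    push_cast
    ring
  · push_cast
    rw [add_zero, add_zero]
    ring

theorem isBigO_logGammaP_sub_stirlingMain {δ : ℝ} (hδ : -1 < δ) :
    (fun w => logGammaP w - (stirlingMain w + (Real.log (2 * Real.pi) / 2 : ℝ)))
      =O[cobounded ℂ ⊓ 𝓟 (closedSector δ)] fun w => w⁻¹ := by
  obtain ⟨C, hC⟩ := exists_norm_sum_stirlingIncrement_le hδ
  refine IsBigO.of_bound C ?_
  filter_upwards [hC, mem_inf_of_left (eventually_ne_cobounded (0 : ℂ)),
    mem_inf_of_right (mem_principal_self _)] with w hbound hw0 hw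
  rw [norm_inv]
  exact le_of_tendsto
    (tendsto_sum_stirlingIncrement (mem_slitPlane_of_mem_closedSector hδ hw hw0)).norm
    (Eventually.of_forall hbound)

lemma add_ofReal_mem_closedSector {δ : ℝ} (hδ : -1 < δ) {w : ℂ} (hw : w ∈ closedSector δ)
    (hw0 : w ≠ 0) {t : ℝ} (ht : 0 ≤ t) : w + t ∈ closedSector δ := by
  have hsector : δ * ‖w‖ ≤ w.re := hw
  have hδ1 : δ ≤ 1 := le_one_of_mem_closedSector hw hw0
  have hdiff : |‖w + t‖ - ‖w‖| ≤ t := by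
    simpa [abs_of_nonneg ht] using abs_norm_sub_norm_le (w + t) w
  have hprod : δ * (‖w + t‖ - ‖w‖) ≤ 1 * t :=
    (le_abs_self _).trans (abs_mul δ _ ▸ mul_le_mul (abs_le.2 ⟨hδ.le, hδ1⟩) hdiff
      (abs_nonneg _) zero_le_one)
  change δ * ‖w + t‖ ≤ (w + t).re
  rw [add_re, ofReal_re]
  linarith

lemma isBigO_stirlingMain_add_sub {δ : ℝ} (hδ : -1 < δ) {m : ℝ} (hm : 0 < m) :
    (fun w => stirlingMain (w + m) - ((w + m - 1 / 2) * log w - w))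
      =O[cobounded ℂ ⊓ 𝓟 (closedSector δ)] fun w => w⁻¹ := by
  have hne : ∀ᶠ w in cobounded ℂ, w ≠ 0 := eventually_ne_cobounded 0
  have hdiv : Tendsto (fun w : ℂ => m / w) (cobounded ℂ) (𝓝 0) := by
    simpa [div_eq_mul_inv] using tendsto_inv₀_cobounded.const_mul (m : ℂ)
  have hquad : (fun w : ℂ => (w + (m - 1 / 2)) * (log (1 + m / w) - m / w))
      =O[cobounded ℂ] fun w => w⁻¹ := by
    refine (((isBigO_refl _ _).add (isLittleO_const_cobounded _).isBigO).mul
      (log_sub_self_isBigO.comp_tendsto hdiv)).trans ?_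
    refine ((isBigO_refl (fun w : ℂ => w⁻¹) _).const_mul_left ((m : ℂ) ^ 2)).congr' ?_
      EventuallyEq.rfl
    filter_upwards [hne] with w hw0
    simp only [Function.comp_apply]
    field_simp
  have hlin := (isBigO_refl (fun w : ℂ => w⁻¹) (cobounded ℂ)).const_mul_left ((m - 1 / 2) * m : ℂ)
  refine ((hquad.add hlin).mono inf_le_left).congr' ?_ EventuallyEq.rfl
  filter_upwards [mem_inf_of_left hne, mem_inf_of_right (mem_principal_self _)] with w hw0 hw
  rw [stirlingMain, log_add_ofReal (mem_slitPlane_of_mem_closedSector hδ hw hw0) hm]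
  generalize log (1 + m / w) = l
  field_simp
  ring

theorem isBigO_logGammaP_add_sub {δ : ℝ} (hδ : -1 < δ) {m : ℝ} (hm : 0 < m) :
    (fun w => logGammaP (w + m) -
      ((w + m - 1 / 2) * log w - w + (Real.log (2 * Real.pi) / 2 : ℝ)))
      =O[cobounded ℂ ⊓ 𝓟 (closedSector δ)] fun w => w⁻¹ := by
  have hne : ∀ᶠ w in cobounded ℂ ⊓ 𝓟 (closedSector δ), w ≠ 0 :=
    mem_inf_of_left (eventually_ne_cobounded 0)
  have hshift : Tendsto (fun w : ℂ => w + m) (cobounded ℂ ⊓ 𝓟 (closedSector δ))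
      (cobounded ℂ ⊓ 𝓟 (closedSector δ)) := by
    refine tendsto_inf.2 ⟨(tendsto_add_const_cobounded _).mono_left inf_le_left,
      tendsto_principal.2 ?_⟩
    filter_upwards [hne, mem_inf_of_right (mem_principal_self _)] with w hw0 hw
      using add_ofReal_mem_closedSector hδ hw hw0 hm.le
  have hinv : (fun w : ℂ => (w + m)⁻¹) =O[cobounded ℂ ⊓ 𝓟 (closedSector δ)] fun w => w⁻¹ := by
    refine IsBigO.inv_rev (((isLittleO_const_cobounded m).right_isBigO_add.congr_right
      fun w => add_comm _ _).mono inf_le_left) ?_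
    filter_upwards [hne] with w hw0 h using absurd h hw0
  refine ((((isBigO_logGammaP_sub_stirlingMain hδ).comp_tendsto hshift).trans hinv).add
    (isBigO_stirlingMain_add_sub hδ hm)).congr_left fun w => ?_
  simp only [Function.comp_apply]
  ring

/-! ### Stirling's formula integrated along an arc -/

lemma norm_integral_sub_integral_le {E : Type*} [NormedAddCommGroup E] [NormedSpace ℝ E]
    {a b C : ℝ} {f g : ℝ → E}
    (hf : AEStronglyMeasurable f (volume.restrict (Set.uIoc a b)))
    (hg : IntervalIntegrable g volume a b) (hle : ∀ t ∈ Set.uIoc a b, ‖f t - g t‖ ≤ C) :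
    ‖(∫ t in a..b, f t) - ∫ t in a..b, g t‖ ≤ C * |b - a| := by
  have hsub : IntervalIntegrable (fun t => f t - g t) volume a b := by
    refine (intervalIntegrable_const (c := C)).mono_fun
      (hf.sub (intervalIntegrable_iff.1 hg).aestronglyMeasurable) ?_
    filter_upwards [self_mem_ae_restrict measurableSet_uIoc] with t ht
    exact (hle t ht).trans (le_abs_self C)
  have hfint : IntervalIntegrable f volume a b := by simpa using hsub.add hg
  rw [← intervalIntegral.integral_sub hfint hg]
  exact intervalIntegral.norm_integral_le_of_norm_le_const hle

lemma exists_closedSector_of_abs_lt_pi {K : Set ℝ} (hK : IsCompact K) {u : ℝ → ℝ}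
    (hu : ContinuousOn u K) (hlt : ∀ t ∈ K, |u t| < Real.pi) :
    ∃ δ : ℝ, -1 < δ ∧ ∀ t ∈ K, ∀ τ : ℝ, 0 ≤ τ → (τ * exp (u t * I) : ℂ) ∈ closedSector δ := by
  rcases K.eq_empty_or_nonempty with rfl | hne
  · exact ⟨0, by norm_num, by simp⟩
  obtain ⟨t₀, ht₀, hmin⟩ := hK.exists_isMinOn hne (Real.continuous_cos.comp_continuousOn hu)
  refine ⟨Real.cos (u t₀), ?_, fun t ht τ hτ => ?_⟩
  · rw [← Real.cos_pi, ← Real.cos_abs (u t₀)]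
    exact Real.cos_lt_cos_of_nonneg_of_le_pi (abs_nonneg _) le_rfl (hlt t₀ ht₀)
  · change Real.cos (u t₀) * ‖_‖ ≤ re _
    rw [norm_mul, norm_exp_ofReal_mul_I, mul_one, norm_real, Real.norm_of_nonneg hτ, re_ofReal_mul,
      exp_ofReal_mul_I_re, mul_comm]
    exact mul_le_mul_of_nonneg_left (hmin ht) hτ

lemma log_ofReal_mul_exp_mul_I {τ θ : ℝ} (hτ : 0 < τ) (hθ : |θ| < Real.pi) :
    log (τ * exp (θ * I)) = Real.log τ + θ * I := by
  rw [log_ofReal_mul hτ (exp_ne_zero _), log_exp] <;> simp [(abs_lt.1 hθ).1, (abs_lt.1 hθ).2.le]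

lemma exists_norm_logGammaP_arc_sub_le {K : Set ℝ} (hK : IsCompact K) {u : ℝ → ℝ}
    (hu : ContinuousOn u K) (hlt : ∀ t ∈ K, |u t| < Real.pi) {m : ℝ} (hm : 0 < m) :
    ∃ C : ℝ, ∀ᶠ τ : ℝ in atTop, ∀ t ∈ K,
      ‖logGammaP (τ * exp (u t * I) + m) -
        ((τ * exp (u t * I) + m - 1 / 2) * (Real.log τ + u t * I) - τ * exp (u t * I) +
          (Real.log (2 * Real.pi) / 2 : ℝ))‖ ≤ C * τ⁻¹ := by
  obtain ⟨δ, hδ, hsector⟩ := exists_closedSector_of_abs_lt_pi hK hu hlt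
  obtain ⟨C, hC⟩ := (isBigO_logGammaP_add_sub hδ hm).bound
  obtain ⟨M, -, hM⟩ := hasBasis_cobounded_norm.eventually_iff.1 (eventually_inf_principal.1 hC)
  refine ⟨C, ?_⟩
  filter_upwards [eventually_gt_atTop 0, eventually_ge_atTop M] with τ hτ hτM t ht
  have hnorm : ‖(τ * exp (u t * I) : ℂ)‖ = τ := by
    rw [norm_mul, norm_exp_ofReal_mul_I, mul_one, norm_real, Real.norm_of_nonneg hτ.le]
  have hbound := hM (hτM.trans_eq hnorm.symm) (hsector t ht τ hτ.le)
  rwa [log_ofReal_mul_exp_mul_I hτ (hlt t ht), norm_inv, hnorm] at hbound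

lemma integral_stirling_arc {a b : ℝ} {u : ℝ → ℝ} {W : ℝ → ℂ}
    (hu : ContinuousOn u (Set.uIcc a b)) (hW : ContinuousOn W (Set.uIcc a b)) (m τ L G : ℂ) :
    ∫ t in a..b, ((τ * exp (u t * I) + m - 1 / 2) * (L + u t * I) - τ * exp (u t * I) - G) * W t =
      τ * L * (∫ t in a..b, exp (u t * I) * W t) +
        τ * (∫ t in a..b, exp (u t * I) * (u t * I - 1) * W t) +
        ((m - 1 / 2) * L - G) * (∫ t in a..b, W t) + (m - 1 / 2) * I * ∫ t in a..b, u t * W t := by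
  have hcexp : ContinuousOn (fun t => exp (u t * I)) (Set.uIcc a b) := by fun_prop
  have h₀ : IntervalIntegrable (fun t => exp (u t * I) * W t) volume a b :=
    (hcexp.mul hW).intervalIntegrable
  have h₁ : IntervalIntegrable (fun t => exp (u t * I) * (u t * I - 1) * W t) volume a b :=
    ContinuousOn.intervalIntegrable (by fun_prop)
  have h₂ : IntervalIntegrable (fun t => u t * W t) volume a b :=
    ContinuousOn.intervalIntegrable (by fun_prop)
  simp only [← intervalIntegral.integral_const_mul]
  rw [← intervalIntegral.integral_add (h₀.const_mul _) (h₁.const_mul _),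
    ← intervalIntegral.integral_add ((h₀.const_mul _).add (h₁.const_mul _))
      (hW.intervalIntegrable.const_mul _),
    ← intervalIntegral.integral_add (((h₀.const_mul _).add (h₁.const_mul _)).add
      (hW.intervalIntegrable.const_mul _)) (h₂.const_mul _)]
  refine intervalIntegral.integral_congr fun t _ => ?_
  ring

theorem isBigO_integral_logGammaP_arc_sub {a b : ℝ} {u : ℝ → ℝ} {W : ℝ → ℂ}
    (hu : ContinuousOn u (Set.uIcc a b)) (hlt : ∀ t ∈ Set.uIcc a b, |u t| < Real.pi)
    (hW : ContinuousOn W (Set.uIcc a b)) {m : ℝ} (hm : 0 < m) (G : ℂ) :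
    (fun τ : ℝ => (∫ t in a..b, (logGammaP (τ * exp (u t * I) + m) - G) * W t) -
      (τ * Real.log τ * (∫ t in a..b, exp (u t * I) * W t) +
        τ * (∫ t in a..b, exp (u t * I) * (u t * I - 1) * W t) +
        ((m - 1 / 2) * Real.log τ - (G - (Real.log (2 * Real.pi) / 2 : ℝ))) * (∫ t in a..b, W t) +
        (m - 1 / 2) * I * ∫ t in a..b, u t * W t))
      =O[atTop] fun τ : ℝ => τ⁻¹ := by
  obtain ⟨C, hC⟩ := exists_norm_logGammaP_arc_sub_le isCompact_uIcc hu hlt hm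
  obtain ⟨B, hB⟩ := isCompact_uIcc.exists_bound_of_continuousOn hW
  refine IsBigO.of_bound (C * B * |b - a|) ?_
  filter_upwards [hC, eventually_gt_atTop 0] with τ hτC hτ
  have humeas : AEMeasurable u (volume.restrict (Set.uIoc a b)) :=
    (hu.mono Set.uIoc_subset_uIcc).aemeasurable measurableSet_uIoc
  have hWmeas : AEMeasurable W (volume.restrict (Set.uIoc a b)) :=
    (hW.mono Set.uIoc_subset_uIcc).aemeasurable measurableSet_uIoc
  have hmeas : AEMeasurable (fun t => (logGammaP (τ * exp (u t * I) + m) - G) * W t)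
      (volume.restrict (Set.uIoc a b)) :=
    ((measurable_logGammaP.comp_aemeasurable (by fun_prop)).sub_const G).mul hWmeas
  rw [← integral_stirling_arc hu hW, Real.norm_of_nonneg (inv_nonneg.2 hτ.le)]
  refine (norm_integral_sub_integral_le (C := C * τ⁻¹ * B) hmeas.aestronglyMeasurable
    (ContinuousOn.intervalIntegrable (by fun_prop)) fun t ht => ?_).trans_eq (by ring)
  have ht' := Set.uIoc_subset_uIcc ht
  rw [← sub_mul, norm_mul]
  refine mul_le_mul ?_ (hB t ht') (norm_nonneg _) ((norm_nonneg _).trans (hτC t ht'))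
  convert! hτC t ht' using 2
  ring

/-! ### The half-angle and its integrals -/

section Integrals

variable {E : Type*} [NormedAddCommGroup E] [NormedSpace ℝ E]

lemma intervalIntegral_eq_zero_of_odd {f : ℝ → E} (hf : f.Odd) (a : ℝ) :
    ∫ t in -a..a, f t = 0 := by
  have hneg : ∫ t in -a..a, f (-t) = ∫ t in -a..a, f t := by
    rw [intervalIntegral.integral_comp_neg, neg_neg]
  have hodd : ∫ t in -a..a, f (-t) = -∫ t in -a..a, f t := by
    simp only [hf _, intervalIntegral.integral_neg]
  have : IsAddTorsionFree E := .of_isTorsionFree ℝ E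
  exact self_eq_neg.1 (hneg.symm.trans hodd)

lemma hasDerivAt_integral_of_continuousOn {F F' : ℝ → ℝ → E} {s : Set ℝ} (hs : IsOpen s) {a b : ℝ}
    (hF : ∀ x ∈ s, ContinuousOn (F x) (Set.uIcc a b))
    (hF' : ContinuousOn (Function.uncurry F') (s ×ˢ Set.uIcc a b))
    (hderiv : ∀ x ∈ s, ∀ t ∈ Set.uIcc a b, HasDerivAt (F · t) (F' x t) x) {x₀ : ℝ} (hx₀ : x₀ ∈ s) :
    HasDerivAt (fun x => ∫ t in a..b, F x t) (∫ t in a..b, F' x₀ t) x₀ := by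
  obtain ⟨K, hK, hxK, hKs⟩ := exists_compact_subset hs hx₀
  obtain ⟨B, hB⟩ := (hK.prod isCompact_uIcc).exists_bound_of_continuousOn
    (hF'.mono (Set.prod_mono hKs subset_rfl))
  have hF'x₀ : ContinuousOn (F' x₀) (Set.uIcc a b) :=
    hF'.comp (by fun_prop) fun t ht => Set.mk_mem_prod hx₀ ht
  refine (intervalIntegral.hasDerivAt_integral_of_dominated_loc_of_deriv_le (bound := fun _ => B)
    (mem_interior_iff_mem_nhds.1 hxK) ?_ (hF x₀ hx₀).intervalIntegrable
    hF'x₀.intervalIntegrable.aestronglyMeasurable_restrict_uIoc ?_ intervalIntegrable_const ?_).2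
  · filter_upwards [hs.mem_nhds hx₀] with x hx
    exact (hF x hx).intervalIntegrable.aestronglyMeasurable_restrict_uIoc
  · exact .of_forall fun t ht x hx => hB (x, t) ⟨hx, Set.uIoc_subset_uIcc ht⟩
  · exact .of_forall fun t ht x hx => hderiv x (hKs hx) t (Set.uIoc_subset_uIcc ht)

end Integrals

/-- The angle `v ∈ [-π/2, π/2]` with `sin v = k sin t`. For `k² = 1/(1+c)` the point at angle
`π/2 + 2v` runs through the arc `A` as `t` runs through `[-π/2, π/2]`. -/
def halfAngle (k t : ℝ) : ℝ := Real.arcsin (k * Real.sin t)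

lemma halfAngle_neg (k t : ℝ) : halfAngle k (-t) = -halfAngle k t := by
  simp [halfAngle, Real.arcsin_neg]

lemma continuous_halfAngle : Continuous (Function.uncurry halfAngle) :=
  Real.continuous_arcsin.comp (by fun_prop)

@[fun_prop]
lemma continuous_halfAngle_right (k : ℝ) : Continuous (halfAngle k) :=
  Real.continuous_arcsin.comp (by fun_prop)

section AbsLtOne

variable {k : ℝ}

lemma abs_mul_sin_lt_one (hk : |k| < 1) (t : ℝ) : |k * Real.sin t| < 1 := by
  rw [abs_mul]
  exact mul_lt_one_of_nonneg_of_lt_one_left (abs_nonneg k) hk (Real.abs_sin_le_one t)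

lemma sin_halfAngle (hk : |k| < 1) (t : ℝ) : Real.sin (halfAngle k t) = k * Real.sin t :=
  Real.sin_arcsin' (abs_le.1 (abs_mul_sin_lt_one hk t).le)

lemma halfAngle_mem_Ioo (hk : |k| < 1) (t : ℝ) :
    halfAngle k t ∈ Set.Ioo (-(Real.pi / 2)) (Real.pi / 2) :=
  have h := abs_lt.1 (abs_mul_sin_lt_one hk t)
  ⟨Real.neg_pi_div_two_lt_arcsin.2 h.1, Real.arcsin_lt_pi_div_two.2 h.2⟩

lemma cos_halfAngle_pos (hk : |k| < 1) (t : ℝ) : 0 < Real.cos (halfAngle k t) :=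
  Real.cos_pos_of_mem_Ioo (halfAngle_mem_Ioo hk t)

lemma cos_halfAngle_sq (hk : |k| < 1) (t : ℝ) :
    Real.cos (halfAngle k t) ^ 2 = 1 - (k * Real.sin t) ^ 2 := by
  rw [Real.cos_sq', sin_halfAngle hk]

lemma hasDerivAt_arcsin_of_abs_lt_one {x : ℝ} (hx : |x| < 1) :
    HasDerivAt Real.arcsin (1 / Real.cos (Real.arcsin x)) x := by
  rw [Real.cos_arcsin]
  exact Real.hasDerivAt_arcsin (abs_lt.1 hx).1.ne' (abs_lt.1 hx).2.ne

lemma hasDerivAt_halfAngle_right (hk : |k| < 1) (t : ℝ) :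
    HasDerivAt (halfAngle k) (k * Real.cos t / Real.cos (halfAngle k t)) t := by
  convert! (hasDerivAt_arcsin_of_abs_lt_one (abs_mul_sin_lt_one hk t)).comp t
    ((Real.hasDerivAt_sin t).const_mul k) using 1
  simp only [halfAngle]
  ring

lemma hasDerivAt_halfAngle_left (hk : |k| < 1) (t : ℝ) :
    HasDerivAt (halfAngle · t) (Real.sin t / Real.cos (halfAngle k t)) k := by
  convert! (hasDerivAt_arcsin_of_abs_lt_one (abs_mul_sin_lt_one hk t)).comp k
    (hasDerivAt_mul_const (Real.sin t)) using 1
  simp only [halfAngle]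
  ring

lemma continuous_tan_halfAngle (hk : |k| < 1) : Continuous fun t => Real.tan (halfAngle k t) := by
  simp only [Real.tan_eq_sin_div_cos]
  exact Continuous.div (by fun_prop) (by fun_prop) fun t => (cos_halfAngle_pos hk t).ne'

/-- The `k`-derivative of `halfAngle k t * tan (halfAngle k t)`. -/
def derivHalfAngleMulTan (k t : ℝ) : ℝ :=
  Real.sin t / Real.cos (halfAngle k t) *
    (Real.tan (halfAngle k t) + halfAngle k t / Real.cos (halfAngle k t) ^ 2)

lemma hasDerivAt_halfAngle_mul_tan (hk : |k| < 1) (t : ℝ) :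
    HasDerivAt (fun x => halfAngle x t * Real.tan (halfAngle x t))
      (derivHalfAngleMulTan k t) k := by
  have hv := hasDerivAt_halfAngle_left hk t
  convert! hv.mul (HasDerivAt.comp k (Real.hasDerivAt_tan (cos_halfAngle_pos hk t).ne') hv) using 1
  simp only [derivHalfAngleMulTan, Function.comp_apply]
  ring

lemma continuousOn_derivHalfAngleMulTan (s : Set ℝ) :
    ContinuousOn (Function.uncurry derivHalfAngleMulTan) ({k | |k| < 1} ×ˢ s) := by
  have hv : Continuous fun p : ℝ × ℝ => halfAngle p.1 p.2 := continuous_halfAngle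
  have hcos : ∀ p ∈ {k : ℝ | |k| < 1} ×ˢ s, Real.cos (halfAngle p.1 p.2) ≠ 0 :=
    fun p hp => (cos_halfAngle_pos hp.1 p.2).ne'
  have hcossq : ∀ p ∈ {k : ℝ | |k| < 1} ×ˢ s, Real.cos (halfAngle p.1 p.2) ^ 2 ≠ 0 :=
    fun p hp => pow_ne_zero 2 (hcos p hp)
  simp only [Function.uncurry_def, derivHalfAngleMulTan, Real.tan_eq_sin_div_cos]
  fun_prop (disch := assumption)

lemma hasDerivAt_primitive_derivHalfAngleMulTan (hk : |k| < 1) (t : ℝ) :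
    HasDerivAt
      (fun t => (k * t - halfAngle k t * Real.cos t / Real.cos (halfAngle k t)) / (1 - k ^ 2))
      (derivHalfAngleMulTan k t) t := by
  have hk' : 1 - k ^ 2 ≠ 0 := (sub_pos.2 ((sq_lt_one_iff_abs_lt_one k).2 hk)).ne'
  have hcos := (cos_halfAngle_pos hk t).ne'
  have hv := hasDerivAt_halfAngle_right hk t
  convert! ((hasDerivAt_const_mul k).sub ((hv.mul (Real.hasDerivAt_cos t)).div
    hv.cos hcos)).div_const (1 - k ^ 2) using 1
  have hcossq := cos_halfAngle_sq hk t
  have hsq := Real.sin_sq_add_cos_sq t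
  rw [derivHalfAngleMulTan, Real.tan_eq_sin_div_cos, sin_halfAngle hk]
  simp only [Pi.mul_apply]
  generalize halfAngle k t = v at *
  field_simp
  linear_combination -(Real.cos v * k + Real.sin t * v) * hcossq +
    (Real.cos v * k + Real.sin t * v * k ^ 2) * hsq

lemma integral_derivHalfAngleMulTan (hk : |k| < 1) :
    ∫ t in -(Real.pi / 2)..Real.pi / 2, derivHalfAngleMulTan k t = Real.pi * k / (1 - k ^ 2) := by
  have hcont : ContinuousOn (derivHalfAngleMulTan k) (Set.uIcc (-(Real.pi / 2)) (Real.pi / 2)) :=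
    (continuousOn_derivHalfAngleMulTan _).comp (f := fun t => (k, t)) (by fun_prop)
      fun t ht => ⟨hk, ht⟩
  rw [intervalIntegral.integral_eq_sub_of_hasDerivAt
    (fun t _ => hasDerivAt_primitive_derivHalfAngleMulTan hk t) hcont.intervalIntegrable]
  simp only [Real.cos_neg, Real.cos_pi_div_two]
  ring

theorem integral_halfAngle_mul_tan (hk : |k| < 1) :
    ∫ t in -(Real.pi / 2)..Real.pi / 2, halfAngle k t * Real.tan (halfAngle k t) =
      -(Real.pi / 2) * Real.log (1 - k ^ 2) := by
  have hopen : IsOpen {x : ℝ | |x| < 1} := isOpen_lt continuous_abs continuous_const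
  have hconn : IsPreconnected {x : ℝ | |x| < 1} := by
    simp only [abs_lt]
    exact isPreconnected_Ioo
  have hleft (x : ℝ) (hx : |x| < 1) : HasDerivAt
      (fun x => ∫ t in -(Real.pi / 2)..Real.pi / 2, halfAngle x t * Real.tan (halfAngle x t))
      (Real.pi * x / (1 - x ^ 2)) x := by
    rw [← integral_derivHalfAngleMulTan hx]
    exact hasDerivAt_integral_of_continuousOn hopen
      (fun y hy => ((continuous_halfAngle_right y).mul (continuous_tan_halfAngle hy)).continuousOn)
      (continuousOn_derivHalfAngleMulTan _) (fun y hy t _ => hasDerivAt_halfAngle_mul_tan hy t) hx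
  have hright (x : ℝ) (hx : |x| < 1) : HasDerivAt (fun x => -(Real.pi / 2) * Real.log (1 - x ^ 2))
      (Real.pi * x / (1 - x ^ 2)) x := by
    have hx' : 1 - x ^ 2 ≠ 0 := (sub_pos.2 ((sq_lt_one_iff_abs_lt_one x).2 hx)).ne'
    convert! (((hasDerivAt_pow 2 x).const_sub 1).log hx').const_mul (-(Real.pi / 2)) using 1
    push_cast
    ring
  exact hopen.eqOn_of_deriv_eq hconn
    (fun x hx => (hleft x hx).differentiableAt.differentiableWithinAt)
    (fun x hx => (hright x hx).differentiableAt.differentiableWithinAt)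
    (fun x hx => (hleft x hx).deriv.trans (hright x hx).deriv.symm)
    (show |(0 : ℝ)| < 1 by simp) (by simp [halfAngle]) hk

end AbsLtOne

/-- The smooth weight to which `(1 - i (Im b₂)/ζ) dζ / r(ζ)` pulls back under
`ζ = i |b₂| e^{2iv}`, where `v = halfAngle k t`. -/
def arcWeight (k t : ℝ) : ℂ := 2 * I * (k ^ 2 + (1 - k ^ 2) * Real.tan (halfAngle k t) * I)

section ArcWeight

variable {k : ℝ}

lemma continuous_arcWeight (hk : |k| < 1) : Continuous (arcWeight k) := by
  have := continuous_ofReal.comp (continuous_tan_halfAngle hk)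
  unfold arcWeight
  fun_prop

lemma integral_arcWeight (hk : |k| < 1) :
    ∫ t in -(Real.pi / 2)..Real.pi / 2, arcWeight k t = 2 * Real.pi * I * k ^ 2 := by
  have hodd : Function.Odd
      fun t => 2 * I * ((1 - k ^ 2) * Real.tan (halfAngle k t) * I) := fun t => by
    simp only [halfAngle_neg, Real.tan_neg]
    push_cast
    ring
  have hcont := continuous_ofReal.comp (continuous_tan_halfAngle hk)
  simp only [arcWeight, mul_add]
  rw [intervalIntegral.integral_add (by simp) (Continuous.intervalIntegrable (by fun_prop) _ _),
    intervalIntegral_eq_zero_of_odd hodd, intervalIntegral.integral_const, real_smul]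
  push_cast
  ring

lemma integral_two_mul_halfAngle_mul_arcWeight (hk : |k| < 1) :
    ∫ t in -(Real.pi / 2)..Real.pi / 2, ((2 * halfAngle k t : ℝ) : ℂ) * arcWeight k t =
      2 * Real.pi * (1 - k ^ 2) * Real.log (1 - k ^ 2) := by
  have hodd : Function.Odd fun t => (4 * I * k ^ 2 * halfAngle k t : ℂ) := fun t => by
    simp only [halfAngle_neg]
    push_cast
    ring
  have := continuous_ofReal.comp (continuous_halfAngle_right k)
  have hcont := continuous_ofReal.comp
    ((continuous_halfAngle_right k).mul (continuous_tan_halfAngle hk))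
  have hsplit (t : ℝ) : ((2 * halfAngle k t : ℝ) : ℂ) * arcWeight k t =
      4 * I * k ^ 2 * halfAngle k t +
        -4 * (1 - k ^ 2) * (halfAngle k t * Real.tan (halfAngle k t) : ℝ) := by
    rw [arcWeight]
    push_cast
    linear_combination 4 * halfAngle k t * (1 - k ^ 2) * tan (halfAngle k t) * I_sq
  simp only [hsplit]
  rw [intervalIntegral.integral_add (Continuous.intervalIntegrable (by fun_prop) _ _)
      (Continuous.intervalIntegrable (by fun_prop) _ _), intervalIntegral_eq_zero_of_odd hodd,
    intervalIntegral.integral_const_mul, intervalIntegral.integral_ofReal,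
    integral_halfAngle_mul_tan hk]
  push_cast
  ring

end ArcWeight

/-! ### The arc -/

/-- The modulus `k = 1/√(1+c)` of the substitution `sin v = k sin t`, determined by
`sin φ = 1 - 2k²`. -/
def arcModulus (c : ℝ) : ℝ := √(rhoOf c)

section Arc

variable {c : ℝ}

lemma rhoOf_pos (hc : 0 < c) : 0 < rhoOf c := by
  rw [rhoOf]
  positivity

lemma arcModulus_pos (hc : 0 < c) : 0 < arcModulus c := Real.sqrt_pos.2 (rhoOf_pos hc)

lemma arcModulus_sq (hc : 0 < c) : arcModulus c ^ 2 = rhoOf c := Real.sq_sqrt (rhoOf_pos hc).le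

lemma arcModulus_sq_lt_one (hc : 0 < c) : arcModulus c ^ 2 < 1 := by
  rw [arcModulus_sq hc, rhoOf, div_lt_one] <;> linarith

lemma abs_arcModulus_lt_one (hc : 0 < c) : |arcModulus c| < 1 :=
  (sq_lt_one_iff_abs_lt_one _).1 (arcModulus_sq_lt_one hc)

lemma one_sub_two_mul_arcModulus_sq (hc : 0 < c) :
    1 - 2 * arcModulus c ^ 2 = (c - 1) / (c + 1) := by
  rw [arcModulus_sq hc, rhoOf]
  field_simp
  ring

lemma phiOf_eq (hc : 0 < c) : phiOf c = Real.pi / 2 - 2 * Real.arcsin (arcModulus c) := by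
  have habs := abs_lt.1 (abs_arcModulus_lt_one hc)
  have hnonneg := Real.arcsin_nonneg.2 (arcModulus_pos hc).le
  have hle := Real.arcsin_le_pi_div_two (arcModulus c)
  refine Real.arcsin_eq_of_sin_eq ?_ ⟨by linarith, by linarith⟩
  rw [Real.sin_pi_div_two_sub, Real.cos_two_mul, Real.cos_sq', Real.sin_arcsin habs.1.le habs.2.le,
    ← one_sub_two_mul_arcModulus_sq hc]
  ring

lemma sin_phiOf (hc : 0 < c) : Real.sin (phiOf c) = 1 - 2 * arcModulus c ^ 2 := by
  have habs := abs_lt.1 (abs_arcModulus_lt_one hc)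
  rw [phiOf_eq hc, Real.sin_pi_div_two_sub, Real.cos_two_mul, Real.cos_sq',
    Real.sin_arcsin habs.1.le habs.2.le]
  ring

lemma b2Of_im (hc : 0 < c) : (b2Of c).im = b2abs c * (1 - 2 * arcModulus c ^ 2) := by
  rw [b2Of, im_ofReal_mul, exp_ofReal_mul_I_im, sin_phiOf hc]

lemma b2abs_pos (hc : 0 < c) : 0 < b2abs c := by
  have hcos : 0 < Real.cos (phiOf c) := by
    refine Real.cos_pos_of_mem_Ioo ⟨Real.neg_pi_div_two_lt_arcsin.2 ?_,
      Real.arcsin_lt_pi_div_two.2 ?_⟩ <;>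
    linarith [one_sub_two_mul_arcModulus_sq hc, arcModulus_sq_lt_one hc,
      pow_pos (arcModulus_pos hc) 2]
  rw [b2abs]
  positivity

lemma integral_phiOf_eq (hc : 0 < c) (g : ℝ → ℂ) :
    ∫ θ in phiOf c..Real.pi - phiOf c, g θ =
      ∫ t in -(Real.pi / 2)..Real.pi / 2,
        (2 * (arcModulus c * Real.cos t / Real.cos (halfAngle (arcModulus c) t))) •
          g (Real.pi / 2 + 2 * halfAngle (arcModulus c) t) := by
  have hk := abs_arcModulus_lt_one hc
  have hleft : phiOf c = Real.pi / 2 + 2 * halfAngle (arcModulus c) (-(Real.pi / 2)) := by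
    rw [phiOf_eq hc, halfAngle_neg, halfAngle, Real.sin_pi_div_two, mul_one]
    ring
  have hright : Real.pi - phiOf c = Real.pi / 2 + 2 * halfAngle (arcModulus c) (Real.pi / 2) := by
    rw [phiOf_eq hc, halfAngle, Real.sin_pi_div_two, mul_one]
    ring
  rw [hright, hleft]
  symm
  refine intervalIntegral.integral_deriv_smul_comp_of_deriv_nonneg
    (f := fun t => Real.pi / 2 + 2 * halfAngle (arcModulus c) t) (by fun_prop)
    (fun t _ => ((hasDerivAt_halfAngle_right hk t).const_mul 2).const_add _) fun t ht => ?_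
  rw [min_eq_left (by linarith [Real.pi_pos]), max_eq_right (by linarith [Real.pi_pos])] at ht
  have := Real.cos_pos_of_mem_Ioo ht
  have := cos_halfAngle_pos hk t
  have := arcModulus_pos hc
  positivity

end Arc

section HalfAngleExp

variable {k : ℝ}

lemma ofReal_mul_exp_pi_div_two_add (R v : ℝ) :
    R * exp ((Real.pi / 2 + 2 * v : ℝ) * I) = I * (R * exp (v * I) ^ 2) := by
  rw [← exp_nat_mul]
  push_cast
  rw [add_mul, exp_add, exp_pi_div_two_mul_I]
  ring_nf

lemma exp_halfAngle_mul_I (hk : |k| < 1) (t : ℝ) :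
    exp (halfAngle k t * I) = Real.cos (halfAngle k t) + k * Real.sin t * I := by
  rw [exp_mul_I, ← ofReal_cos, ← ofReal_sin, sin_halfAngle hk, ofReal_mul]

lemma exp_halfAngle_mul_I_inv (hk : |k| < 1) (t : ℝ) :
    (exp (halfAngle k t * I))⁻¹ = Real.cos (halfAngle k t) - k * Real.sin t * I := by
  refine inv_eq_of_mul_eq_one_right ?_
  have hsq : (Real.cos (halfAngle k t) : ℂ) ^ 2 = 1 - (k * Real.sin t) ^ 2 := by
    exact_mod_cast cos_halfAngle_sq hk t
  rw [exp_halfAngle_mul_I hk]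
  linear_combination hsq - (k * Real.sin t) ^ 2 * I_sq

lemma radicand_eq_sq (hk : |k| < 1) (t : ℝ) :
    1 - 2 * (1 - 2 * k ^ 2) * (exp (halfAngle k t * I))⁻¹ ^ 2 + (exp (halfAngle k t * I))⁻¹ ^ 4 =
      (2 * (k * Real.cos t) * (exp (halfAngle k t * I))⁻¹) ^ 2 := by
  have hsum : exp (halfAngle k t * I) ^ 2 + (exp (halfAngle k t * I))⁻¹ ^ 2 =
      2 - 4 * (k * Real.sin t) ^ 2 := by
    have hsq : (Real.cos (halfAngle k t) : ℂ) ^ 2 = 1 - (k * Real.sin t) ^ 2 := by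
      exact_mod_cast cos_halfAngle_sq hk t
    rw [exp_halfAngle_mul_I_inv hk, exp_halfAngle_mul_I hk]
    linear_combination 2 * hsq + 2 * (k * Real.sin t) ^ 2 * I_sq
  have htrig : (Real.sin t : ℂ) ^ 2 + (Real.cos t : ℂ) ^ 2 = 1 := by
    exact_mod_cast Real.sin_sq_add_cos_sq t
  have hinv := mul_inv_cancel₀ (exp_ne_zero (halfAngle k t * I))
  set e := exp (halfAngle k t * I)
  linear_combination e⁻¹ ^ 2 * hsum - (e * e⁻¹ + 1) * hinv - 4 * (k : ℂ) ^ 2 * e⁻¹ ^ 2 * htrig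

lemma arcWeight_mul_cos_halfAngle (hk : |k| < 1) (t : ℝ) :
    arcWeight k t * Real.cos (halfAngle k t) =
      I * (exp (halfAngle k t * I) - (1 - 2 * k ^ 2) * (exp (halfAngle k t * I))⁻¹) := by
  have hcos : (Real.cos (halfAngle k t) : ℂ) ≠ 0 := ofReal_ne_zero.2 (cos_halfAngle_pos hk t).ne'
  rw [arcWeight, exp_halfAngle_mul_I_inv hk, exp_halfAngle_mul_I hk, Real.tan_eq_sin_div_cos,
    sin_halfAngle hk, ofReal_div, ofReal_mul]
  field_simp
  ring

end HalfAngleExp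

section ArcIntegral

variable {c : ℝ}

lemma rBranch_eq (hc : 0 < c) {t : ℝ} (ht : t ∈ Set.Ioo (-(Real.pi / 2)) (Real.pi / 2)) :
    rBranch c (I * (b2abs c * exp (halfAngle (arcModulus c) t * I) ^ 2)) =
      I * (b2abs c * exp (halfAngle (arcModulus c) t * I) ^ 2) *
        (2 * (arcModulus c * Real.cos t) * (exp (halfAngle (arcModulus c) t * I))⁻¹) := by
  have hk := abs_arcModulus_lt_one hc
  have hrad := radicand_eq_sq hk t
  have hre : 0 < (2 * (arcModulus c * Real.cos t) *
      (exp (halfAngle (arcModulus c) t * I))⁻¹ : ℂ).re := by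
    have hk₀ := arcModulus_pos hc
    have hcost := Real.cos_pos_of_mem_Ioo ht
    have hcosv := cos_halfAngle_pos hk t
    have hpos : 0 < 2 * (arcModulus c * Real.cos t) * Real.cos (halfAngle (arcModulus c) t) := by
      positivity
    simpa [-ofReal_cos, -ofReal_sin, exp_halfAngle_mul_I_inv hk] using hpos
  have hR : (b2abs c : ℂ) ≠ 0 := ofReal_ne_zero.2 (b2abs_pos hc).ne'
  have := exp_ne_zero (halfAngle (arcModulus c) t * I)
  rw [rBranch, b2Of_im hc, one_div, ← sq_cpow_two_inv hre, ← hrad]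
  congr 2
  push_cast
  field_simp
  linear_combination -I_sq

lemma smul_integrand_eq_arcWeight (hc : 0 < c) {t : ℝ}
    (ht : t ∈ Set.Ioo (-(Real.pi / 2)) (Real.pi / 2)) {ζ : ℂ}
    (hζ : ζ = I * (b2abs c * exp (halfAngle (arcModulus c) t * I) ^ 2)) :
    (2 * (arcModulus c * Real.cos t / Real.cos (halfAngle (arcModulus c) t))) •
        ((1 - I * (b2Of c).im / ζ) * (rBranch c ζ)⁻¹ * (I * ζ)) = arcWeight (arcModulus c) t := by
  have hk := abs_arcModulus_lt_one hc
  have hcos : (Real.cos (halfAngle (arcModulus c) t) : ℂ) ≠ 0 :=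
    ofReal_ne_zero.2 (cos_halfAngle_pos hk t).ne'
  have hcost : (Real.cos t : ℂ) ≠ 0 := ofReal_ne_zero.2 (Real.cos_pos_of_mem_Ioo ht).ne'
  have hkne : (arcModulus c : ℂ) ≠ 0 := ofReal_ne_zero.2 (arcModulus_pos hc).ne'
  have hR : (b2abs c : ℂ) ≠ 0 := ofReal_ne_zero.2 (b2abs_pos hc).ne'
  have := exp_ne_zero (halfAngle (arcModulus c) t * I)
  rw [← mul_left_inj' hcos, arcWeight_mul_cos_halfAngle hk, hζ, rBranch_eq hc ht, b2Of_im hc,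
    real_smul]
  push_cast [-ofReal_cos]
  field_simp

theorem arcIntegral_eq_integral_arcWeight (hc : 0 < c) (Ψ : ℂ → ℂ) :
    arcIntegral (b2abs c) (phiOf c)
        (fun ζ => Ψ ζ * (1 - I * (b2Of c).im / ζ) * (rBranch c ζ)⁻¹) =
      ∫ t in -(Real.pi / 2)..Real.pi / 2,
        Ψ (I * (b2abs c * exp (halfAngle (arcModulus c) t * I) ^ 2)) *
          arcWeight (arcModulus c) t := by
  rw [arcIntegral, integral_phiOf_eq hc]
  simp only [intervalIntegral.integral_of_le (neg_le_self Real.pi_div_two_pos.le),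
    integral_Ioc_eq_integral_Ioo]
  refine setIntegral_congr_fun measurableSet_Ioo fun t ht => ?_
  simp only [mul_assoc I, ofReal_mul_exp_pi_div_two_add]
  rw [← smul_integrand_eq_arcWeight hc ht rfl]
  simp only [real_smul]
  ring

end ArcIntegral

/-! ### The expansion -/

lemma hasStdExpansion_of_isBigO {ρ R : ℝ} (hρ : 0 < ρ) (hR : 0 < R) {F : ℝ → ℂ} {A B C κ : ℂ}
    (hF : (fun τ : ℝ => F τ - (A * τ * Real.log τ + B * τ + C * Real.log τ + κ))
      =O[atTop] fun τ : ℝ => τ⁻¹) :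
    HasStdExpansion ρ (fun s => F (R * s ^ ρ)) (κ + C * Real.log R) := by
  have hτ : Tendsto (fun s : ℝ => R * s ^ ρ) atTop atTop :=
    (tendsto_rpow_atTop hρ).const_mul_atTop hR
  have hlog : (fun _ : ℝ => (1 : ℝ)) =O[atTop] Real.log :=
    Real.isLittleO_const_log_atTop.isBigO
  have hinv : (fun s : ℝ => (R * s ^ ρ)⁻¹) =O[atTop] fun s : ℝ => s ^ (-ρ) * Real.log s := by
    refine (((isBigO_refl (fun s : ℝ => s ^ (-ρ)) atTop).const_mul_left R⁻¹).mul hlog).congr'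
      ?_ .rfl
    filter_upwards [eventually_gt_atTop 0] with s hs
    rw [mul_one, mul_inv, Real.rpow_neg hs.le]
  refine ⟨0, 0, 0, A * R * ρ, R * (A * Real.log R + B), 0, C * ρ,
    ((hF.comp_tendsto hτ).trans hinv).congr' ?_ .rfl⟩
  filter_upwards [eventually_gt_atTop 0] with s hs
  simp only [Function.comp_apply]
  rw [Real.log_mul hR.ne' (Real.rpow_pos_of_pos hs ρ).ne', Real.log_rpow hs]
  push_cast
  ring

/-- The integral of `logΓ(m + τ e^{2iv}) - ln Γ(m)`, `v = halfAngle k t`, against `arcWeight`: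
up to a constant factor this is `I(s)` in the scale variable `τ = |b₂| s^ρ`. -/
def arcLogGammaIntegral (k m τ : ℝ) : ℂ :=
  ∫ t in -(Real.pi / 2)..Real.pi / 2,
    (logGammaP (τ * exp ((2 * halfAngle k t : ℝ) * I) + m) - Real.log (Real.Gamma m)) *
      arcWeight k t

theorem exists_isBigO_arcLogGammaIntegral_sub {k m : ℝ} (hk : |k| < 1) (hm : 0 < m) :
    ∃ A B : ℂ, (fun τ : ℝ => arcLogGammaIntegral k m τ -
      (A * τ * Real.log τ + B * τ + 2 * Real.pi * I * ((m - 1 / 2) * k ^ 2) * Real.log τ +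
        2 * Real.pi * I * ((Real.log (2 * Real.pi) / 2 - Real.log (Real.Gamma m)) * k ^ 2 +
          (m - 1 / 2) * ((1 - k ^ 2) * Real.log (1 - k ^ 2)))))
      =O[atTop] fun τ : ℝ => τ⁻¹ := by
  have hlt (t : ℝ) : |2 * halfAngle k t| < Real.pi := by
    obtain ⟨hleft, hright⟩ := halfAngle_mem_Ioo hk t
    exact abs_lt.2 ⟨by linarith, by linarith⟩
  have h := isBigO_integral_logGammaP_arc_sub (a := -(Real.pi / 2)) (b := Real.pi / 2)
    (u := fun t => 2 * halfAngle k t) (by fun_prop) (fun t _ => hlt t)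
    (continuous_arcWeight hk).continuousOn hm (Real.log (Real.Gamma m))
  rw [integral_arcWeight hk, integral_two_mul_halfAngle_mul_arcWeight hk] at h
  refine ⟨∫ t in -(Real.pi / 2)..Real.pi / 2,
      exp ((2 * halfAngle k t : ℝ) * I) * arcWeight k t,
    ∫ t in -(Real.pi / 2)..Real.pi / 2,
      exp ((2 * halfAngle k t : ℝ) * I) * ((2 * halfAngle k t : ℝ) * I - 1) * arcWeight k t,
    h.congr_left fun τ => ?_⟩
  rw [arcLogGammaIntegral]
  push_cast
  ring

section Arc

variable {c : ℝ}

lemma Ifun_eq (hc : 0 < c) (m s : ℝ) :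
    Ifun c m s = I * (1 + c) / (2 * Real.pi) *
      arcLogGammaIntegral (arcModulus c) m (b2abs c * s ^ rhoOf c) := by
  have hpi : (Real.pi : ℂ) ≠ 0 := ofReal_ne_zero.2 Real.pi_ne_zero
  have hI := I_ne_zero
  rw [Ifun, arcIntegral_eq_integral_arcWeight hc, arcLogGammaIntegral,
    ← intervalIntegral.integral_const_mul, ← intervalIntegral.integral_const_mul]
  refine intervalIntegral.integral_congr fun t _ => ?_
  have harg : (m : ℂ) - I * (s ^ rhoOf c : ℝ) *
        (I * (b2abs c * exp (halfAngle (arcModulus c) t * I) ^ 2)) =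
      (b2abs c * s ^ rhoOf c : ℝ) * exp ((2 * halfAngle (arcModulus c) t : ℝ) * I) + m := by
    have hexp : exp ((2 * halfAngle (arcModulus c) t : ℝ) * I) =
        exp (halfAngle (arcModulus c) t * I) ^ 2 := by
      rw [← exp_nat_mul]
      push_cast
      ring_nf
    rw [hexp, ofReal_mul]
    linear_combination -(b2abs c * (s ^ rhoOf c : ℝ) *
      exp (halfAngle (arcModulus c) t * I) ^ 2) * I_sq
  simp only [PsiTilde, harg]
  push_cast
  field_simp
  ring

lemma kappa5_eq (hc : 0 < c) (m : ℝ) {α νmin : ℝ} (hα : (2 * α - νmin) / 2 = m - 1 / 2) :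
    kappa5 c m α νmin =
      -(1 + c) * ((Real.log (2 * Real.pi) / 2 - Real.log (Real.Gamma m)) * arcModulus c ^ 2 +
        (m - 1 / 2) * ((1 - arcModulus c ^ 2) * Real.log (1 - arcModulus c ^ 2))) +
      -(1 + c) * ((m - 1 / 2) * arcModulus c ^ 2) * Real.log (b2abs c) := by
  have hk : 0 < 1 - arcModulus c ^ 2 := sub_pos.2 (arcModulus_sq_lt_one hc)
  have hR := b2abs_pos hc
  have hadd : b2abs c + (b2Of c).im = 2 * b2abs c * (1 - arcModulus c ^ 2) := by
    rw [b2Of_im hc]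
    ring
  have hdiv : 2 * b2abs c ^ 2 / (b2abs c + (b2Of c).im) = b2abs c / (1 - arcModulus c ^ 2) := by
    rw [hadd]
    field_simp
  rw [kappa5, hdiv, hadd, b2Of_im hc, hα, Real.log_mul (by positivity) hk.ne',
    Real.log_mul two_ne_zero hR.ne', Real.log_div hR.ne' hk.ne']
  field_simp
  ring

end Arc

theorem I1alpha_asymptotics_general {c α νmin : ℝ} (hc : 0 < c) (hm : 0 < 1 + 2 * α - νmin) :
    HasStdExpansion (rhoOf c) (Ifun c ((1 + 2 * α - νmin) / 2))
      ((kappa5 c ((1 + 2 * α - νmin) / 2) α νmin : ℝ) : ℂ) := by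
  obtain ⟨A, B, hAB⟩ :=
    exists_isBigO_arcLogGammaIntegral_sub (abs_arcModulus_lt_one hc) (half_pos hm)
  rw [kappa5_eq hc _ (by ring), funext (Ifun_eq hc _)]
  generalize (1 + 2 * α - νmin) / 2 = m at *
  have hconst : I * (1 + c) / (2 * Real.pi) * (2 * Real.pi * I) = -(1 + c) := by
    have hpi : (Real.pi : ℂ) ≠ 0 := ofReal_ne_zero.2 Real.pi_ne_zero
    field_simp
    rw [I_sq, neg_one_mul]
  push_cast
  refine hasStdExpansion_of_isBigO
    (F := fun τ => I * (1 + c) / (2 * Real.pi) * arcLogGammaIntegral (arcModulus c) m τ)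
    (rhoOf_pos hc) (b2abs_pos hc)
    (A := I * (1 + c) / (2 * Real.pi) * A) (B := I * (1 + c) / (2 * Real.pi) * B)
    ((hAB.const_mul_left (I * (1 + c) / (2 * Real.pi))).congr_left fun τ => ?_)
  rw [← hconst]
  ring

/-- asymptotics of `I_{1,α}`. -/
theorem I1alpha_asymptotics (r q : ℕ) (hrq : q < r) (νmin α : ℝ)
    (hνmin : -1 < νmin) (hα : νmin ≤ α) :
    HasStdExpansion (rhoOf ((r : ℝ) - q))
      (Ifun ((r : ℝ) - q) ((1 + 2 * α - νmin) / 2))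
      ((kappa5 ((r : ℝ) - q) ((1 + 2 * α - νmin) / 2) α νmin : ℝ) : ℂ) :=
  I1alpha_asymptotics_general (sub_pos.2 (Nat.cast_lt.2 hrq)) (by linarith)
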